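/- arXiv:1411.7604 — 2 statements merged into one kernel-verified Lean document; each statement's English description precedes it below -/
import Mathlib

section
/- The set of parameters s ∈ [√2,2] such that for every L > 0 and every α ∈ (0,1) the tent map f_s does not have standard shadowing with accuracy σ(ε) = L·ε^α has full Lebesgue measure in [√2,2] (its complement in [√2,2] has Lebesgue measure zero). (First part of the paper's Theorem F.) -/
open Set MeasureTheory

/-- The tent map with slope `s`, extended to all of ℝ. -/
noncomputable def tentMap (s x : ℝ) : ℝ := if x ≤ 1 / 2 then s * x else s * (1 - x)

/-- The tent map `f_s` has standard shadowing on [0,1] with accuracy σ. -/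
def TentHasShadowingWithAccuracy (s : ℝ) (σ : ℝ → ℝ) : Prop :=
  ∃ ε₀ > (0 : ℝ), ∀ ε ∈ Ioo (0 : ℝ) ε₀, ∀ x : ℕ → ℝ,
    (∀ k : ℕ, x k ∈ Icc (0 : ℝ) 1) →
    (∀ k : ℕ, |tentMap s (x k) - x (k + 1)| ≤ ε) →
    ∃ p ∈ Icc (0 : ℝ) 1, ∀ k : ℕ, |x k - (tentMap s)^[k] p| < σ ε


/-- Normalised critical orbit. -/
noncomputable def cy : ℕ → ℝ → ℝ
  | 0, _ => 0
  | n + 1, s => 1 - s * |cy n s|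

theorem cy_succ (n : ℕ) (s : ℝ) : cy (n + 1) s = 1 - s * |cy n s| := rfl

theorem cy_one (s : ℝ) : cy 1 s = 1 := by simp [cy]

theorem cy_two (s : ℝ) : cy 2 s = 1 - s := by simp [cy]

theorem cy_three {s : ℝ} (hs : 1 ≤ s) : cy 3 s = 1 - s * (s - 1) := by
  rw [cy_succ, cy_two, abs_of_nonpos (by linarith)]; ring

theorem cy_continuous (n : ℕ) : Continuous (cy n) := by
  induction n with
  | zero => exact continuous_const
  | succ n ih =>
    have : cy (n + 1) = fun s => 1 - s * |cy n s| := rfl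
    rw [this]; fun_prop

theorem cy_abs_le {s : ℝ} (h1 : 1 ≤ s) (h2 : s ≤ 2) (n : ℕ) : |cy n s| ≤ 1 := by
  induction n with
  | zero => simp [cy]
  | succ n ih =>
    rw [cy_succ, abs_le]
    have := abs_nonneg (cy n s)
    constructor <;> nlinarith

theorem tent_eq (s x : ℝ) : tentMap s x = s / 2 - s * |x - 1 / 2| := by
  unfold tentMap
  split_ifs with h
  · rw [abs_of_nonpos (by linarith)]; ring
  · rw [abs_of_nonneg (by linarith)]; ring

theorem tent_iter {s : ℝ} (h1 : 1 ≤ s) (n : ℕ) :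
    (tentMap s)^[n] (1 / 2) = 1 / 2 + (s - 1) / 2 * cy n s := by
  induction n with
  | zero => simp [cy]
  | succ n ih =>
    rw [Function.iterate_succ_apply', ih, tent_eq, cy_succ]
    have : |1 / 2 + (s - 1) / 2 * cy n s - 1 / 2| = (s - 1) / 2 * |cy n s| := by
      rw [add_sub_cancel_left, abs_mul, abs_of_nonneg (by linarith)]
    rw [this]; ring

/-- once zero, periodic -/
theorem cy_periodic {s : ℝ} {n : ℕ} (h : cy n s = 0) (k : ℕ) : cy (k * n) s = 0 := by
  have key : ∀ j, cy (n + j) s = cy j s := by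
    intro j
    induction j with
    | zero => simpa [cy] using h
    | succ j ih => rw [← add_assoc, cy_succ, cy_succ, ih]
  induction k with
  | zero => simp [cy]
  | succ k ih => rw [Nat.succ_mul, add_comm, key, ih]

/-! ### Dynamics -/

theorem no_shadowing {s : ℝ} (hs1 : 1 < s) (hs2 : s < 2)
    (H : ∀ ρ ∈ Ioo (0 : ℝ) 1, ∃ c > 0, ∀ n ≥ 1, c * ρ ^ n ≤ |(tentMap s)^[n] (1 / 2) - 1 / 2|)
    {L α : ℝ} (hL : 0 < L) (hα : α ∈ Ioo (0 : ℝ) 1) :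
    ¬ TentHasShadowingWithAccuracy s (fun ε => L * ε ^ α) := by
  rintro ⟨ε₀, hε₀, hsh⟩
  have hs0 : 0 < s := by linarith
  -- choose ρ
  set θ : ℝ := s⁻¹ ^ α with hθ
  have hinv1 : s⁻¹ < 1 := inv_lt_one_of_one_lt₀ hs1
  have hinv0 : 0 < s⁻¹ := inv_pos.mpr hs0
  have hθ0 : 0 < θ := Real.rpow_pos_of_pos hinv0 _
  have hθ1 : θ < 1 := Real.rpow_lt_one hinv0.le hinv1 hα.1
  obtain ⟨ρ, hρ1, hρ2⟩ := exists_between hθ1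
  have hρ0 : 0 < ρ := hθ0.trans hρ1
  obtain ⟨c, hc, hcn⟩ := H ρ ⟨hρ0, hρ2⟩
  have t1 : Filter.Tendsto (fun N : ℕ => s⁻¹ ^ N) Filter.atTop (nhds 0) :=
    tendsto_pow_atTop_nhds_zero_of_lt_one hinv0.le hinv1
  have t2 : Filter.Tendsto (fun N : ℕ => L * θ ^ N) Filter.atTop (nhds 0) := by
    simpa using (tendsto_pow_atTop_nhds_zero_of_lt_one hθ0.le hθ1).const_mul L
  have t3 : Filter.Tendsto (fun N : ℕ => 2 * L * (θ / ρ) ^ N) Filter.atTop (nhds 0) := by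
    simpa using (tendsto_pow_atTop_nhds_zero_of_lt_one (by positivity)
      ((div_lt_one hρ0).2 hρ1)).const_mul (2 * L)
  obtain ⟨N, ⟨hN1, hN2⟩, hN3, hN4⟩ :=
    (((t1.eventually_lt_const hε₀).and (t1.eventually_lt_const
      (show 0 < 1 - s / 2 by linarith))).and
      ((t2.eventually_lt_const one_pos).and (t3.eventually_lt_const hc))).exists
  set ε : ℝ := s⁻¹ ^ N with hε
  have hε0 : 0 < ε := by positivity
  have hσ : L * ε ^ α = L * θ ^ N := by
    rw [hε, hθ, ← Real.rpow_natCast, ← Real.rpow_natCast, ← Real.rpow_mul hinv0.le,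
      ← Real.rpow_mul hinv0.le, mul_comm α]
  have hσρ : 2 * (L * θ ^ N) < c * ρ ^ N := by
    rw [div_pow, ← mul_div_assoc, div_lt_iff₀ (by positivity)] at hN4
    linarith
  have hmaps : ∀ x ∈ Icc (0 : ℝ) 1, tentMap s x ∈ Icc (0 : ℝ) 1 := by
    intro x hx
    rw [tent_eq]
    have h1 : |x - 1 / 2| ≤ 1 / 2 := by rw [abs_le]; constructor <;> linarith [hx.1, hx.2]
    have h2 := abs_nonneg (x - 1 / 2)
    constructor <;> nlinarith
  let x : ℕ → ℝ := fun k => match k with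
    | 0 => 1 / 2
    | k + 1 => (tentMap s)^[k] (s / 2 + ε)
  have hx0 : x 0 = 1 / 2 := rfl
  have hx1 : x 1 = s / 2 + ε := rfl
  have hxs : ∀ k, x (k + 2) = tentMap s (x (k + 1)) := fun k =>
    Function.iterate_succ_apply' _ _ _
  have hxI : ∀ k, x k ∈ Icc (0 : ℝ) 1 := by
    intro k
    match k with
    | 0 => rw [hx0]; constructor <;> norm_num
    | k + 1 =>
      induction k with
      | zero => rw [hx1]; constructor <;> linarith
      | succ k ih => rw [hxs]; exact hmaps _ ih
  have hpseudo : ∀ k, |tentMap s (x k) - x (k + 1)| ≤ ε := by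
    intro k
    match k with
    | 0 =>
      rw [hx0, hx1, tent_eq]
      simp [abs_of_pos hε0]
    | k + 1 => rw [hxs]; simpa using hε0.le
  obtain ⟨p, hp, hpx⟩ := hsh ε ⟨hε0, hN1⟩ x hxI hpseudo
  simp only [hσ] at hpx
  have hw : ∀ k, |x (k + 1) - (tentMap s)^[k + 1] (1 / 2)| ≤ s ^ k * ε := by
    intro k
    induction k with
    | zero => rw [hx1]; simp [tent_eq, abs_of_pos hε0]
    | succ k ih =>
      rw [hxs, Function.iterate_succ_apply', tent_eq, tent_eq]
      generalize (tentMap s)^[k + 1] (1 / 2) = w at *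
      have h3 := abs_abs_sub_abs_le_abs_sub (w - 1 / 2) (x (k + 1) - 1 / 2)
      rw [show s / 2 - s * |x (k + 1) - 1 / 2| - (s / 2 - s * |w - 1 / 2|) =
        s * (|w - 1 / 2| - |x (k + 1) - 1 / 2|) by ring, abs_mul, abs_of_pos hs0, pow_succ]
      have h4 : |w - 1 / 2 - (x (k + 1) - 1 / 2)| = |x (k + 1) - w| := by
        rw [abs_sub_comm]; congr 1; ring
      rw [h4] at h3
      nlinarith
  have hgrow : ∀ k ≤ N, s ^ k * ε ≤ |x (k + 1) - (tentMap s)^[k + 1] p| := by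
    intro k
    induction k with
    | zero =>
      intro _
      rw [hx1]
      simp only [zero_add, Function.iterate_one, tent_eq]
      have h2 := abs_nonneg (p - 1 / 2)
      refine le_trans ?_ (le_abs_self _)
      nlinarith
    | succ k ih =>
      intro hk
      have ih := ih (by omega)
      have h1 := hpx (k + 1)
      have h2 := hw k
      have h3 := hcn (k + 1) (by omega)
      have h4 : c * ρ ^ N ≤ c * ρ ^ (k + 1) :=
        mul_le_mul_of_nonneg_left (pow_le_pow_of_le_one hρ0.le hρ2.le hk) hc.le
      rw [hxs, Function.iterate_succ_apply' _ (k + 1) p, tent_eq, tent_eq]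
      generalize (tentMap s)^[k + 1] (1 / 2) = w at *
      generalize (tentMap s)^[k + 1] p = z at *
      generalize x (k + 1) = u at *
      generalize L * θ ^ N = σ at *
      have hfar : σ < |u - 1 / 2| := by
        have := abs_sub_abs_le_abs_sub (w - 1 / 2) (u - 1 / 2)
        have h5 : |w - 1 / 2 - (u - 1 / 2)| = |u - w| := by
          rw [abs_sub_comm]; congr 1; ring
        rw [h5] at this
        linarith
      rw [show s / 2 - s * |u - 1 / 2| - (s / 2 - s * |z - 1 / 2|) =
        s * (|z - 1 / 2| - |u - 1 / 2|) by ring, abs_mul, abs_of_pos hs0, pow_succ]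
      have h6 : |(|z - 1 / 2| - |u - 1 / 2|)| = |u - z| := by
        obtain ⟨h7, h8⟩ := abs_lt.1 h1
        rcases le_total 0 (u - 1 / 2) with h | h
        · rw [abs_of_nonneg h] at hfar
          rw [abs_of_nonneg h, abs_of_nonneg (by linarith : 0 ≤ z - 1 / 2), abs_sub_comm u z]
          congr 1; ring
        · rw [abs_of_nonpos h] at hfar
          rw [abs_of_nonpos h, abs_of_nonpos (by linarith : z - 1 / 2 ≤ 0)]
          congr 1; ring
      rw [h6]
      nlinarith
  have h1 := hgrow N le_rfl
  have h2 := hpx (N + 1)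
  have h3 : s ^ N * ε = 1 := by
    rw [hε, ← mul_pow, mul_inv_cancel₀ hs0.ne', one_pow]
  linarith

/-! ### Parameter space -/

/-- `[u,v]` on which the signs of the first `n` terms are constant. -/
def GoodI (n : ℕ) (u v : ℝ) : Prop :=
  ∀ i < n, (∀ s ∈ Icc u v, 0 ≤ cy i s) ∨ (∀ s ∈ Icc u v, cy i s ≤ 0)

theorem GoodI.mono {n : ℕ} {u v u' v' : ℝ} (h : GoodI n u v) (hu : u ≤ u') (hv : v' ≤ v) :
    GoodI n u' v' := fun i hi =>
  (h i hi).imp (fun h s hs => h s ⟨hu.trans hs.1, hs.2.trans hv⟩)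
    (fun h s hs => h s ⟨hu.trans hs.1, hs.2.trans hv⟩)

theorem GoodI.succ {n : ℕ} {u v : ℝ} (h : GoodI n u v)
    (h' : (∀ s ∈ Icc u v, 0 ≤ cy n s) ∨ (∀ s ∈ Icc u v, cy n s ≤ 0)) : GoodI (n + 1) u v := by
  intro i hi
  rcases Nat.lt_succ_iff_lt_or_eq.1 hi with h1 | rfl
  · exact h i h1
  · exact h'

theorem cy_upper {b s t : ℝ} (hs : 1 ≤ s) (hst : s ≤ t) (htb : t ≤ b) (hb : b ≤ 2)
    (hb' : 4 / 3 ≤ b) (n : ℕ) : |cy n t - cy n s| ≤ 3 * (b ^ n - 1) * (t - s) := by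
  induction n with
  | zero => simp [cy]
  | succ n ih =>
    rw [cy_succ, cy_succ]
    have h1 := cy_abs_le hs (by linarith) n
    have h2 := abs_abs_sub_abs_le_abs_sub (cy n t) (cy n s)
    have h3 : |1 - t * |cy n t| - (1 - s * |cy n s|)| ≤
        t * |cy n t - cy n s| + (t - s) := by
      have e : 1 - t * |cy n t| - (1 - s * |cy n s|) =
        -(t * (|cy n t| - |cy n s|) + (t - s) * |cy n s|) := by ring
      rw [e, abs_neg]
      refine (abs_add_le _ _).trans ?_
      rw [abs_mul, abs_mul, abs_of_nonneg (by linarith : 0 ≤ t),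
        abs_of_nonneg (by linarith : 0 ≤ t - s), abs_abs]
      have : (t - s) * |cy n s| ≤ (t - s) * 1 :=
        mul_le_mul_of_nonneg_left h1 (by linarith)
      have : t * |(|cy n t| - |cy n s|)| ≤ t * |cy n t - cy n s| :=
        mul_le_mul_of_nonneg_left h2 (by linarith)
      linarith
    have h4 : t * |cy n t - cy n s| ≤ b * (3 * (b ^ n - 1) * (t - s)) :=
      mul_le_mul htb ih (abs_nonneg _) (by linarith)
    have h5 : (t - s) * 4 ≤ (t - s) * (3 * b) :=
      mul_le_mul_of_nonneg_left (by linarith) (by linarith)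
    rw [pow_succ]
    nlinarith

theorem cy_lower_step {a u v s t r : ℝ} {n : ℕ} (ha : 1 ≤ a) (hau : a ≤ u) (hv : v ≤ 2)
    (hg : GoodI (n + 1) u v) (hs : s ∈ Icc u v) (ht : t ∈ Icc u v) (hst : s ≤ t)
    (hr : 0 ≤ r)
    (h : r * (t - s) ≤ |cy n t - cy n s|) :
    (a * r - 1) * (t - s) ≤ |cy (n + 1) t - cy (n + 1) s| := by
  have h1 := cy_abs_le (by linarith [hs.1] : 1 ≤ s) (by linarith [hs.2]) n
  have habs : |(|cy n t| - |cy n s|)| = |cy n t - cy n s| := by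
    rcases hg n (by omega) with h' | h'
    · rw [abs_of_nonneg (h' t ht), abs_of_nonneg (h' s hs)]
    · rw [abs_of_nonpos (h' t ht), abs_of_nonpos (h' s hs), abs_sub_comm (cy n t)]
      congr 1; ring
  rw [cy_succ, cy_succ]
  have e : 1 - t * |cy n t| - (1 - s * |cy n s|) =
    -(t * (|cy n t| - |cy n s|) - (-((t - s) * |cy n s|))) := by ring
  rw [e, abs_neg]
  refine le_trans ?_ (abs_sub_abs_le_abs_sub _ _)
  rw [abs_neg, abs_mul, abs_mul, habs, abs_of_nonneg (by linarith [ht.1] : 0 ≤ t),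
        abs_of_nonneg (by linarith : 0 ≤ t - s), abs_abs]
  have h2 : (t - s) * |cy n s| ≤ (t - s) * 1 :=
    mul_le_mul_of_nonneg_left h1 (by linarith)
  have h3 : a * (r * (t - s)) ≤ t * |cy n t - cy n s| :=
    mul_le_mul (by linarith [ht.1]) h (mul_nonneg hr (by linarith)) (by linarith [ht.1])
  linarith

theorem cy_lower {a u v s t q : ℝ} {n₀ : ℕ} (ha : 1 < a) (hau : a ≤ u) (hv : v ≤ 2)
    (hs : s ∈ Icc u v) (ht : t ∈ Icc u v) (hst : s ≤ t) (hq : 0 ≤ q)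
    (h0 : (q + 1 / (a - 1)) * (t - s) ≤ |cy n₀ t - cy n₀ s|) (k : ℕ)
    (hg : GoodI (n₀ + k) u v) :
    (q * a ^ k + 1 / (a - 1)) * (t - s) ≤ |cy (n₀ + k) t - cy (n₀ + k) s| := by
  induction k with
  | zero => simpa using h0
  | succ k ih =>
    have ih := ih (fun i hi => hg i (by omega))
    have hpos : 0 < a - 1 := by linarith
    have := cy_lower_step (n := n₀ + k) ha.le hau hv hg hs ht hst (by positivity) ih
    refine le_trans (le_of_eq ?_) this
    congr 1
    field_simp
    ring

/-- Split at the zero of a monotone function. -/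
theorem split_good {n : ℕ} {u v : ℝ} (huv : u ≤ v) (hg : GoodI n u v)
    (hinj : InjOn (cy n) (Icc u v)) :
    GoodI (n + 1) u v ∨ ∃ w ∈ Icc u v, cy n w = 0 ∧ GoodI (n + 1) u w ∧ GoodI (n + 1) w v := by
  by_cases hz : ∃ w ∈ Icc u v, cy n w = 0
  · right
    obtain ⟨w, hw, hw0⟩ := hz
    refine ⟨w, hw, hw0, ?_⟩
    rcases (cy_continuous n).continuousOn.strictMonoOn_of_injOn_Icc' huv hinj with h | h
    · refine ⟨(hg.mono le_rfl hw.2).succ (Or.inr fun s hs => ?_),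
        (hg.mono hw.1 le_rfl).succ (Or.inl fun s hs => ?_)⟩
      · rw [← hw0]; exact h.monotoneOn ⟨hs.1, hs.2.trans hw.2⟩ hw hs.2
      · rw [← hw0]; exact h.monotoneOn hw ⟨hw.1.trans hs.1, hs.2⟩ hs.1
    · refine ⟨(hg.mono le_rfl hw.2).succ (Or.inl fun s hs => ?_),
        (hg.mono hw.1 le_rfl).succ (Or.inr fun s hs => ?_)⟩
      · rw [← hw0]; exact h.antitoneOn ⟨hs.1, hs.2.trans hw.2⟩ hw hs.2
      · rw [← hw0]; exact h.antitoneOn hw ⟨hw.1.trans hs.1, hs.2⟩ hs.1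
  · left
    refine hg.succ ?_
    by_contra hcon
    push Not at hcon
    obtain ⟨⟨s, hs, hs0⟩, t, ht, ht0⟩ := hcon
    have := isPreconnected_Icc.intermediate_value hs ht (cy_continuous n).continuousOn
      (show (0 : ℝ) ∈ Icc (cy n s) (cy n t) from ⟨hs0.le, ht0.le⟩)
    exact hz this

section count

/-- Standing hypotheses for counting. -/
structure Setup (a b : ℝ) (n₀ : ℕ) : Prop where
  ha : 7 / 5 ≤ a
  hb : b ≤ 2
  hab : a ≤ b
  inj : ∀ n ≥ n₀, ∀ u v, a ≤ u → v ≤ b → GoodI n u v → InjOn (cy n) (Icc u v)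

variable {a b : ℝ} {n₀ : ℕ}

theorem Setup.step (S : Setup a b n₀) {V : ℝ → ℝ → ℝ}
    (hV : ∀ u w v, u ≤ w → w ≤ v → V u v ≤ V u w + V w v) {n : ℕ} (hn : n₀ ≤ n) {B E : ℝ}
    (hB : 0 ≤ B)
    (h : ∀ u v, a ≤ u → u ≤ v → v ≤ b → GoodI (n + 1) u v → V u v ≤ B + E * (v - u))
    {u v : ℝ} (hu : a ≤ u) (huv : u ≤ v) (hv : v ≤ b) (hg : GoodI n u v) :
    V u v ≤ 2 * B + E * (v - u) := by
  rcases split_good huv hg (S.inj n hn u v hu hv hg) with h1 | ⟨w, hw, -, h1, h2⟩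
  · linarith [h u v hu huv hv h1]
  · linarith [hV u w v hw.1 hw.2, h u w hu hw.1 (hw.2.trans hv) h1,
      h w v (hu.trans hw.1) hw.2 hv h2]

theorem Setup.small (S : Setup a b n₀) {n : ℕ} (hn : n₀ ≤ n)
    {u v : ℝ} (hu : a ≤ u) (huv : u ≤ v) (hv : v ≤ b) (hg : GoodI n u v)
    (hsmall : 3 * b ^ (n + 2) * (v - u) < a - 1) :
    ∃ w ∈ Icc u v, GoodI (n + 3) u w ∧ GoodI (n + 3) w v := by
  have ha := S.ha
  have hb := S.hb
  have hosc : ∀ i ≤ n + 2, ∀ s ∈ Icc u v, ∀ t ∈ Icc u v, |cy i t - cy i s| < a - 1 := by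
    have key : ∀ i ≤ n + 2, ∀ s ∈ Icc u v, ∀ t ∈ Icc u v, s ≤ t →
        |cy i t - cy i s| < a - 1 := by
      intro i hi s hs t ht hst
      have h1 := cy_upper (b := b) (by linarith [hs.1]) hst (by linarith [ht.2]) hb
        (by linarith) i
      have h2 : b ^ i ≤ b ^ (n + 2) := pow_le_pow_right₀ (by linarith) hi
      have h3 : 3 * (b ^ i - 1) * (t - s) ≤ 3 * b ^ (n + 2) * (v - u) :=
        mul_le_mul (by linarith) (by linarith [ht.2, hs.1]) (by linarith)
          (by have : 0 < b := by linarith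
              positivity)
      linarith
    intro i hi s hs t ht
    rcases le_total s t with h | h
    · exact key i hi s hs t ht h
    · rw [abs_sub_comm]; exact key i hi t ht s hs h
  -- after a zero at time m the next two signs are constant
  have nxt1 : ∀ m, m + 1 ≤ n + 2 → ∀ w ∈ Icc u v, cy m w = 0 → ∀ s ∈ Icc u v,
      0 ≤ cy (m + 1) s := by
    intro m hm w hw h0 s hs
    have h1 := (abs_lt.1 (hosc (m + 1) hm w hw s hs)).1
    have h2 : cy (m + 1) w = 1 := by rw [cy_succ, h0]; simp
    linarith [hw.2]
  have nxt2 : ∀ m, m + 2 ≤ n + 2 → ∀ w ∈ Icc u v, cy m w = 0 → ∀ s ∈ Icc u v,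
      cy (m + 2) s ≤ 0 := by
    intro m hm w hw h0 s hs
    have h1 := (abs_lt.1 (hosc (m + 2) hm w hw s hs)).2
    have h2 : cy (m + 1) w = 1 := by rw [cy_succ, h0]; simp
    have h3 : cy (m + 2) w = 1 - w := by rw [cy_succ, h2]; simp
    linarith [hw.1]
  have sub1 : ∀ w ∈ Icc u v, ∀ s ∈ Icc u w, s ∈ Icc u v :=
    fun w hw s hs => ⟨hs.1, hs.2.trans hw.2⟩
  have sub2 : ∀ w ∈ Icc u v, ∀ s ∈ Icc w v, s ∈ Icc u v :=
    fun w hw s hs => ⟨hw.1.trans hs.1, hs.2⟩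
  rcases split_good huv hg (S.inj n hn u v hu hv hg) with h1 | ⟨w, hw, h0, h1, h2⟩
  · rcases split_good huv h1 (S.inj (n + 1) (by omega) u v hu hv h1) with h2 | ⟨w, hw, h0, h3, h4⟩
    · rcases split_good huv h2 (S.inj (n + 2) (by omega) u v hu hv h2) with
        h3 | ⟨w, hw, h0, h3, h4⟩
      · exact ⟨u, ⟨le_rfl, huv⟩, h3.mono le_rfl huv, h3⟩
      · exact ⟨w, hw, h3, h4⟩
    · exact ⟨w, hw,
        h3.succ (Or.inl fun s hs => nxt1 (n + 1) (by omega) w hw h0 s (sub1 w hw s hs)),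
        h4.succ (Or.inl fun s hs => nxt1 (n + 1) (by omega) w hw h0 s (sub2 w hw s hs))⟩
  · exact ⟨w, hw,
      (h1.succ (Or.inl fun s hs => nxt1 n (by omega) w hw h0 s (sub1 w hw s hs))).succ
        (Or.inr fun s hs => nxt2 n (by omega) w hw h0 s (sub1 w hw s hs)),
      (h2.succ (Or.inl fun s hs => nxt1 n (by omega) w hw h0 s (sub2 w hw s hs))).succ
        (Or.inr fun s hs => nxt2 n (by omega) w hw h0 s (sub2 w hw s hs))⟩

theorem Setup.count (S : Setup a b n₀) {V : ℝ → ℝ → ℝ}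
    (hV : ∀ u w v, u ≤ w → w ≤ v → V u v ≤ V u w + V w v) {N : ℕ} {κ K : ℝ} (hκ : 0 ≤ κ)
    (hK : K = 18 * b ^ 2 / ((a - 1) * (b ^ 3 - 2)))
    (h : ∀ u v, a ≤ u → u ≤ v → v ≤ b → GoodI N u v → V u v ≤ κ) (q : ℕ) :
    ∀ n ≥ n₀, n + 3 * q = N → ∀ u v, a ≤ u → u ≤ v → v ≤ b → GoodI n u v →
      V u v ≤ κ * 2 ^ q + κ * K * (b ^ N - 2 ^ q * b ^ n) * (v - u) := by
  have ha := S.ha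
  have hb := S.hb
  have hab := S.hab
  have hb2 : 2 < b ^ 3 := by
    have : (7 / 5 : ℝ) ^ 3 ≤ b ^ 3 := pow_le_pow_left₀ (by norm_num) (by linarith) 3
    norm_num at this
    linarith
  have hb0 : 0 < b := by linarith
  have ha1 : 0 < a - 1 := by linarith
  have hb3 : 0 < b ^ 3 - 2 := by linarith
  have hK0 : 0 ≤ K := by rw [hK]; positivity
  induction q with
  | zero =>
    intro n _ hN u v hu huv hv hg
    have : n = N := by omega
    subst this
    simpa using h u v hu huv hv hg
  | succ q ih =>
    intro n hn hN u v hu huv hv hg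
    have ih := ih (n + 3) (by omega) (by omega)
    set B := κ * 2 ^ q with hB
    set E := κ * K * (b ^ N - 2 ^ q * b ^ (n + 3)) with hE
    have hB0 : 0 ≤ B := by positivity
    by_cases hsm : 3 * b ^ (n + 2) * (v - u) < a - 1
    · obtain ⟨w, hw, h1, h2⟩ := S.small hn hu huv hv hg hsm
      have e1 := ih u w hu hw.1 (hw.2.trans hv) h1
      have e2 := ih w v (hu.trans hw.1) hw.2 hv h2
      have e3 := hV u w v hw.1 hw.2
      have e4 : 0 ≤ κ * K * 2 ^ q * b ^ n * (b ^ 3 - 2) * (v - u) :=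
        mul_nonneg (by positivity) (by linarith)
      have e5 : κ * 2 ^ (q + 1) + κ * K * (b ^ N - 2 ^ (q + 1) * b ^ n) * (v - u) =
        2 * B + E * (v - u) + κ * K * 2 ^ q * b ^ n * (b ^ 3 - 2) * (v - u) := by
        rw [hB, hE]; ring
      rw [e5]
      linarith
    · push Not at hsm
      have s1 := fun u v hu huv hv hg =>
        S.step hV (n := n + 2) (by omega) hB0 ih (u := u) (v := v) hu huv hv hg
      have s2 := fun u v hu huv hv hg =>
        S.step hV (n := n + 1) (by omega) (by positivity) s1 (u := u) (v := v) hu huv hv hg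
      have s3 := S.step hV hn (by positivity) s2 hu huv hv hg
      have e5 : κ * 2 ^ (q + 1) + κ * K * (b ^ N - 2 ^ (q + 1) * b ^ n) * (v - u) =
        2 * B + E * (v - u) + B * (K * b ^ n * (b ^ 3 - 2) * (v - u)) := by
        rw [hB, hE]; ring
      have e6 : 6 ≤ K * b ^ n * (b ^ 3 - 2) * (v - u) := by
        have e7 : K * b ^ n * (b ^ 3 - 2) * (v - u) =
            6 * ((3 * b ^ (n + 2) * (v - u)) / (a - 1)) := by
          rw [hK]; field_simp; ring
        rw [e7]
        have := (one_le_div ha1).2 hsm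
        linarith
      rw [e5]
      nlinarith [mul_le_mul_of_nonneg_left e6 hB0]

theorem Setup.count' (S : Setup a b n₀) (hg : GoodI n₀ a b) :
    ∃ M > 0, ∀ (V : ℝ → ℝ → ℝ), (∀ u w v, u ≤ w → w ≤ v → V u v ≤ V u w + V w v) →
      ∀ N ≥ n₀, ∀ κ ≥ 0, (∀ u v, a ≤ u → u ≤ v → v ≤ b → GoodI N u v → V u v ≤ κ) →
        V a b ≤ κ * (M * b ^ N) := by
  have ha := S.ha
  have hb := S.hb
  have hab := S.hab
  have hb2 : 2 < b ^ 3 := by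
    have : (7 / 5 : ℝ) ^ 3 ≤ b ^ 3 := pow_le_pow_left₀ (by norm_num) (by linarith) 3
    norm_num at this
    linarith
  have hb0 : 0 < b := by linarith
  have ha1 : 0 < a - 1 := by linarith
  have hb3 : 0 < b ^ 3 - 2 := by linarith
  obtain ⟨K, hK⟩ : ∃ K, K = 18 * b ^ 2 / ((a - 1) * (b ^ 3 - 2)) := ⟨_, rfl⟩
  have hK0 : 0 ≤ K := by rw [hK]; positivity
  refine ⟨4 + K, by positivity, fun V hV N hN κ hκ h => ?_⟩
  have main : ∀ q r, n₀ + r + 3 * q = N → r < 3 →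
      V a b ≤ 4 * (κ * 2 ^ q) + κ * K * (b ^ N - 2 ^ q * b ^ (n₀ + r)) * (b - a) := by
    intro q r hqr hr
    have hc := S.count hV hκ hK h q (n₀ + r) (by omega) hqr
    have hB0 : 0 ≤ κ * 2 ^ q := by positivity
    generalize κ * K * (b ^ N - 2 ^ q * b ^ (n₀ + r)) = E at *
    generalize κ * 2 ^ q = B at *
    interval_cases r
    · linarith [hc a b le_rfl hab le_rfl hg]
    · linarith [S.step hV le_rfl hB0 hc le_rfl hab le_rfl hg]
    · have s1 := fun u v hu huv hv hg =>
        S.step hV (n := n₀ + 1) (by omega) hB0 hc (u := u) (v := v) hu huv hv hg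
      linarith [S.step hV le_rfl (by positivity) s1 le_rfl hab le_rfl hg]
  have h1 := main ((N - n₀) / 3) ((N - n₀) % 3) (by omega) (by omega)
  generalize hq : (N - n₀) / 3 = q at h1
  have h2 : (2 : ℝ) ^ q ≤ b ^ N := by
    calc (2 : ℝ) ^ q ≤ (b ^ 3) ^ q := pow_le_pow_left₀ (by norm_num) hb2.le q
      _ = b ^ (3 * q) := (pow_mul _ _ _).symm
      _ ≤ b ^ N := pow_le_pow_right₀ (by linarith) (by omega)
  have h3 : κ * K * (b ^ N - 2 ^ q * b ^ (n₀ + (N - n₀) % 3)) * (b - a) ≤ κ * K * b ^ N := by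
    have : 0 ≤ (2 : ℝ) ^ q * b ^ (n₀ + (N - n₀) % 3) := by positivity
    have h4 : κ * K * (b ^ N - 2 ^ q * b ^ (n₀ + (N - n₀) % 3)) ≤ κ * K * b ^ N :=
      mul_le_mul_of_nonneg_left (by linarith) (by positivity)
    calc _ ≤ κ * K * b ^ N * (b - a) := mul_le_mul_of_nonneg_right h4 (by linarith)
      _ ≤ κ * K * b ^ N * 1 := mul_le_mul_of_nonneg_left (by linarith) (by positivity)
      _ = _ := mul_one _
  have h5 : κ * 2 ^ q ≤ κ * b ^ N := mul_le_mul_of_nonneg_left h2 hκ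
  linarith

end count

/-- The key null set statement on a small parameter interval. -/
theorem ae_interval {a b q ρ : ℝ} {n₀ : ℕ} (ha : 7 / 5 ≤ a) (hab : a ≤ b) (hb : b ≤ 2)
    (hq : 0 < q) (hg : GoodI n₀ a b)
    (h0 : ∀ s ∈ Icc a b, ∀ t ∈ Icc a b, s ≤ t →
      (q + 1 / (a - 1)) * (t - s) ≤ |cy n₀ t - cy n₀ s|)
    (hρ : 0 < ρ) (hρb : ρ * b < a) :
    volume {s | s ∈ Icc a b ∧ ¬ ∀ᶠ n in Filter.atTop, ρ ^ n ≤ |cy n s|} = 0 := by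
  have ha0 : 0 < a := by linarith
  have hb0 : 0 < b := by linarith
  have ha1 : 0 < a - 1 := by linarith
  have hlow : ∀ n ≥ n₀, ∀ u v, a ≤ u → v ≤ b → GoodI n u v → ∀ s ∈ Icc u v, ∀ t ∈ Icc u v,
      s ≤ t → q * a ^ (n - n₀) * (t - s) ≤ |cy n t - cy n s| := by
    intro n hn u v hu hv hg s hs t ht hst
    obtain ⟨k, rfl⟩ := Nat.exists_eq_add_of_le hn
    have := cy_lower (a := a) (by linarith) hu (hv.trans hb) hs ht hst hq.le
      (h0 s ⟨hu.trans hs.1, hs.2.trans hv⟩ t ⟨hu.trans ht.1, ht.2.trans hv⟩ hst) k hg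
    rw [Nat.add_sub_cancel_left]
    have h2 : 0 ≤ 1 / (a - 1) * (t - s) := mul_nonneg (by positivity) (by linarith)
    linarith
  have S : Setup a b n₀ := by
    refine ⟨ha, hb, hab, fun n hn u v hu hv hg s hs t ht hst => ?_⟩
    have hp : 0 < q * a ^ (n - n₀) := by positivity
    rcases le_total s t with h | h
    · have := hlow n hn u v hu hv hg s hs t ht h
      rw [hst, sub_self, abs_zero] at this
      nlinarith
    · have := hlow n hn u v hu hv hg t ht s hs h
      rw [hst, sub_self, abs_zero] at this
      nlinarith
  obtain ⟨M, hM, hMV⟩ := S.count' hg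
  have hvol : ∀ N ≥ n₀, volume.real {s | s ∈ Icc a b ∧ |cy N s| < ρ ^ N} ≤
      (2 * M * a ^ n₀ / q) * (ρ * b / a) ^ N := by
    intro N hN
    have fin : ∀ u v, volume {s | s ∈ Icc u v ∧ |cy N s| < ρ ^ N} ≠ ⊤ := fun u v =>
      ((measure_mono (fun s hs => hs.1)).trans_lt (measure_Icc_lt_top (a := u) (b := v))).ne
    have := hMV (fun u v => volume.real {s | s ∈ Icc u v ∧ |cy N s| < ρ ^ N}) ?_ N hN
      (2 * ρ ^ N / (q * a ^ (N - n₀))) (by positivity) ?_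
    · refine this.trans (le_of_eq ?_)
      have e : a ^ N = a ^ n₀ * a ^ (N - n₀) := by rw [← pow_add]; congr 1; omega
      rw [div_pow, mul_pow, e]
      field_simp
    · intro u w v huw hwv
      refine (measureReal_mono ?_ ?_).trans (measureReal_union_le _ _)
      · intro s hs
        rcases le_total s w with h | h
        · exact Or.inl ⟨⟨hs.1.1, h⟩, hs.2⟩
        · exact Or.inr ⟨⟨h, hs.1.2⟩, hs.2⟩
      · exact (measure_union_lt_top (fin _ _).lt_top (fin _ _).lt_top).ne
    · intro u v hu huv hv hg
      have hp : 0 < q * a ^ (N - n₀) := by positivity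
      have hbd : ∀ s ∈ {s | s ∈ Icc u v ∧ |cy N s| < ρ ^ N},
          ∀ t ∈ {s | s ∈ Icc u v ∧ |cy N s| < ρ ^ N},
          dist s t ≤ 2 * ρ ^ N / (q * a ^ (N - n₀)) := by
        have key : ∀ s ∈ {s | s ∈ Icc u v ∧ |cy N s| < ρ ^ N},
          ∀ t ∈ {s | s ∈ Icc u v ∧ |cy N s| < ρ ^ N}, s ≤ t →
          t - s ≤ 2 * ρ ^ N / (q * a ^ (N - n₀)) := by
          intro s hs t ht hst
          have h1 := hlow N hN u v hu hv hg s hs.1 t ht.1 hst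
          have h2 := abs_sub (cy N t) (cy N s)
          rw [le_div_iff₀ hp]
          linarith [hs.2, ht.2]
        intro s hs t ht
        rw [Real.dist_eq]
        rcases le_total s t with h | h
        · rw [abs_sub_comm, abs_of_nonneg (by linarith)]; exact key s hs t ht h
        · rw [abs_of_nonneg (by linarith)]; exact key t ht s hs h
      refine ENNReal.toReal_le_of_le_ofReal (by positivity) ?_
      refine (Real.volume_le_diam _).trans ?_
      refine Metric.ediam_le fun s hs t ht => ?_
      rw [edist_dist]
      exact ENNReal.ofReal_le_ofReal (hbd s hs t ht)
  have hr1 : ρ * b / a < 1 := (div_lt_one ha0).2 hρb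
  have hsum : ∑' N, volume {s | s ∈ Icc a b ∧ |cy (N + n₀) s| < ρ ^ (N + n₀)} ≠ ⊤ := by
    have hs : Summable fun N : ℕ => (2 * M * a ^ n₀ / q) * (ρ * b / a) ^ (N + n₀) := by
      have := ((summable_geometric_of_lt_one (by positivity) hr1).mul_left
        (2 * M * a ^ n₀ / q))
      exact (summable_nat_add_iff n₀).2 this
    refine ne_top_of_le_ne_top hs.tsum_ofReal_ne_top (ENNReal.tsum_le_tsum fun N => ?_)
    have fin : volume {s | s ∈ Icc a b ∧ |cy (N + n₀) s| < ρ ^ (N + n₀)} ≠ ⊤ :=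
      ((measure_mono (fun s hs => hs.1)).trans_lt (measure_Icc_lt_top (a := a) (b := b))).ne
    rw [← ENNReal.ofReal_toReal fin]
    exact ENNReal.ofReal_le_ofReal (hvol (N + n₀) (by omega))
  have hae := ae_eventually_notMem hsum
  rw [ae_iff] at hae
  refine measure_mono_null (fun s hs => ?_) hae
  simp only [mem_ofPred_eq] at hs ⊢
  intro hcon
  refine hs.2 ?_
  obtain ⟨N, hN⟩ := Filter.eventually_atTop.1 hcon
  refine Filter.eventually_atTop.2 ⟨N + n₀, fun n hn => ?_⟩
  obtain ⟨k, rfl⟩ := Nat.exists_eq_add_of_le' (show n₀ ≤ n by omega)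
  by_contra hlt
  exact hN k (by omega) ⟨hs.1, not_le.1 hlt⟩

theorem good_three {a b : ℝ} (ha : 7 / 5 ≤ a) : GoodI 3 a b := by
  intro i hi
  interval_cases i
  · left; intro s _; simp [cy]
  · left; intro s _; simp [cy]
  · right; intro s hs; rw [cy_two]; linarith [hs.1]

theorem ae_interval_hi {a b ρ : ℝ} (ha : 3 / 2 < a) (hab : a ≤ b) (hb : b ≤ 2)
    (hρ : 0 < ρ) (hρb : ρ * b < a) :
    volume {s | s ∈ Icc a b ∧ ¬ ∀ᶠ n in Filter.atTop, ρ ^ n ≤ |cy n s|} = 0 := by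
  have ha1 : 0 < a - 1 := by linarith
  refine ae_interval (q := 2 * a - 1 - 1 / (a - 1)) (n₀ := 3) (by linarith) hab hb ?_
    (good_three (by linarith)) ?_ hρ hρb
  · rw [sub_pos, div_lt_iff₀ ha1]; nlinarith
  · intro s hs t ht hst
    rw [cy_three (s := s) (by linarith [hs.1]), cy_three (s := t) (by linarith [ht.1]),
      abs_sub_comm]
    refine le_trans ?_ (le_abs_self _)
    have : 0 ≤ (t - s) * (t + s - 2 * a) :=
      mul_nonneg (by linarith) (by linarith [hs.1, ht.1])
    nlinarith

theorem cy_four_lo {s : ℝ} (h1 : 7 / 5 ≤ s) (h2 : s ≤ 3 / 2) :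
    0 ≤ cy 3 s ∧ cy 4 s = (s - 1) * (s ^ 2 - 1) ∧ 0 ≤ cy 4 s := by
  have h3 : 0 ≤ cy 3 s := by rw [cy_three (by linarith)]; nlinarith
  have h4 : cy 4 s = (s - 1) * (s ^ 2 - 1) := by
    rw [cy_succ, abs_of_nonneg h3, cy_three (by linarith)]; ring
  refine ⟨h3, h4, ?_⟩
  rw [h4]
  exact mul_nonneg (by linarith) (by nlinarith)

theorem cy_five_lo {s : ℝ} (h1 : 7 / 5 ≤ s) (h2 : s ≤ 3 / 2) :
    cy 5 s = 1 - s * ((s - 1) * (s ^ 2 - 1)) := by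
  obtain ⟨-, h4, h5⟩ := cy_four_lo h1 h2
  rw [cy_succ, abs_of_nonneg h5, h4]

theorem ae_interval_lo {a b ρ : ℝ} (ha : 7 / 5 ≤ a) (hab : a ≤ b) (hb : b ≤ 3 / 2)
    (hρ : 0 < ρ) (hρb : ρ * b < a) :
    volume {s | s ∈ Icc a b ∧ ¬ ∀ᶠ n in Filter.atTop, ρ ^ n ≤ |cy n s|} = 0 := by
  have ha1 : 0 < a - 1 := by linarith
  refine ae_interval (q := 3 - 1 / (a - 1)) (n₀ := 5) (by linarith) hab (by linarith) ?_
    ?_ ?_ hρ hρb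
  · rw [sub_pos, div_lt_iff₀ ha1]; nlinarith
  · refine ((good_three ha).succ (Or.inl fun s hs => ?_)).succ (Or.inl fun s hs => ?_)
    · exact (cy_four_lo (by linarith [hs.1]) (by linarith [hs.2])).1
    · exact (cy_four_lo (by linarith [hs.1]) (by linarith [hs.2])).2.2
  · intro s hs t ht hst
    have hs1 : 7 / 5 ≤ s := by linarith [hs.1]
    have ht1 : 7 / 5 ≤ t := by linarith [ht.1]
    rw [cy_five_lo hs1 (by linarith [hs.2]), cy_five_lo ht1 (by linarith [ht.2]),
      abs_sub_comm]
    refine le_trans ?_ (le_abs_self _)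
    have e : 1 - s * ((s - 1) * (s ^ 2 - 1)) - (1 - t * ((t - 1) * (t ^ 2 - 1))) =
      ((t ^ 2 + s ^ 2) * (t + s) - (t ^ 2 + t * s + s ^ 2) - (t + s) + 1) * (t - s) := by ring
    rw [e, sub_add_cancel]
    refine mul_le_mul_of_nonneg_right ?_ (by linarith)
    obtain ⟨x, hx⟩ : ∃ x, s = 7 / 5 + x := ⟨s - 7 / 5, by ring⟩
    obtain ⟨y, hy⟩ : ∃ y, t = 7 / 5 + y := ⟨t - 7 / 5, by ring⟩
    have hx0 : 0 ≤ x := by linarith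
    have hy0 : 0 ≤ y := by linarith
    subst hx hy
    have := mul_nonneg hx0 hy0
    have := mul_nonneg (mul_nonneg hx0 hx0) hx0
    have := mul_nonneg (mul_nonneg hy0 hy0) hy0
    have := mul_nonneg (mul_nonneg hx0 hx0) hy0
    have := mul_nonneg (mul_nonneg hy0 hy0) hx0
    nlinarith [sq_nonneg x, sq_nonneg y]

theorem bad_null {ρ : ℝ} (hρ : 0 < ρ) (hρ1 : ρ < 1) :
    volume {s | s ∈ Icc (Real.sqrt 2) 2 ∧ s ≠ 3 / 2 ∧
      ¬ ∀ᶠ n in Filter.atTop, ρ ^ n ≤ |cy n s|} = 0 := by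
  have hsq : 7 / 5 ≤ Real.sqrt 2 := Real.le_sqrt_of_sq_le (by norm_num)
  refine measure_null_of_locally_null _ fun x hx => ?_
  obtain ⟨⟨hx1, hx2⟩, hx3, -⟩ := hx
  have hr : 0 < (1 - ρ) / 4 := by linarith
  have fact : ∀ a b : ℝ, x - (1 - ρ) / 4 ≤ a → b ≤ x + (1 - ρ) / 4 → ρ * b < a := by
    intro a b h1 h2
    have : ρ * b ≤ ρ * (x + (1 - ρ) / 4) := mul_le_mul_of_nonneg_left h2 hρ.le
    nlinarith
  rcases lt_or_gt_of_ne hx3 with h | h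
  · refine ⟨_, ?_, ae_interval_lo (a := max (7 / 5) (x - (1 - ρ) / 4))
      (b := min (3 / 2) (x + (1 - ρ) / 4)) (le_max_left _ _) ?_ (min_le_left _ _) hρ
      (fact _ _ (le_max_right _ _) (min_le_right _ _))⟩
    · have hmem : Ioo (x - (1 - ρ) / 4) (min (3 / 2) (x + (1 - ρ) / 4)) ∈ nhds x :=
        Ioo_mem_nhds (by linarith) (lt_min h (by linarith))
      filter_upwards [self_mem_nhdsWithin, mem_nhdsWithin_of_mem_nhds hmem] with s hs hs'
      exact ⟨⟨max_le (hsq.trans hs.1.1) hs'.1.le, hs'.2.le⟩, hs.2.2⟩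
    · exact (max_le (hsq.trans hx1) (by linarith)).trans (le_min h.le (by linarith) : x ≤ _)
  · refine ⟨_, ?_, ae_interval_hi (a := max ((x + 3 / 2) / 2) (x - (1 - ρ) / 4))
      (b := min 2 (x + (1 - ρ) / 4)) (lt_max_of_lt_left (by linarith)) ?_ (min_le_left _ _) hρ
      (fact _ _ (le_max_right _ _) (min_le_right _ _))⟩
    · have hmem : Ioo (max ((x + 3 / 2) / 2) (x - (1 - ρ) / 4)) (x + (1 - ρ) / 4) ∈ nhds x :=
        Ioo_mem_nhds (max_lt (by linarith) (by linarith)) (by linarith)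
      filter_upwards [self_mem_nhdsWithin, mem_nhdsWithin_of_mem_nhds hmem] with s hs hs'
      exact ⟨⟨hs'.1.le, le_min hs.1.2 hs'.2.le⟩, hs.2.2⟩
    · exact (max_le (by linarith) (by linarith)).trans (le_min hx2 (by linarith) : x ≤ _)

/-- From an eventual bound to a uniform one. -/
theorem uniform_bound {s ρ : ℝ} (hs : 1 < s) (hρ : 0 < ρ) (hρ1 : ρ < 1)
    (h : ∀ᶠ n in Filter.atTop, ρ ^ n ≤ |cy n s|) :
    ∃ c > 0, ∀ n ≥ 1, c * ρ ^ n ≤ |(tentMap s)^[n] (1 / 2) - 1 / 2| := by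
  obtain ⟨N, hN⟩ := Filter.eventually_atTop.1 h
  have hne : ∀ n ≥ 1, cy n s ≠ 0 := by
    intro n hn h0
    have h1 := hN (N * n) (Nat.le_mul_of_pos_right N hn)
    rw [cy_periodic h0, abs_zero] at h1
    exact absurd h1 (not_le.2 (by positivity))
  have hfin : ∀ N : ℕ, ∃ c > 0, ∀ n, 1 ≤ n → n < N → c ≤ |cy n s| := by
    intro N
    induction N with
    | zero => exact ⟨1, one_pos, fun n _ h => by omega⟩
    | succ N ih =>
      obtain ⟨c, hc, hcn⟩ := ih
      rcases Nat.eq_zero_or_pos N with h0 | h0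
      · exact ⟨1, one_pos, fun n _ h => by omega⟩
      · refine ⟨min c |cy N s|, lt_min hc (abs_pos.2 (hne N h0)), fun n h1 h2 => ?_⟩
        rcases Nat.lt_succ_iff_lt_or_eq.1 h2 with h3 | rfl
        · exact (min_le_left _ _).trans (hcn n h1 h3)
        · exact min_le_right _ _
  obtain ⟨c, hc, hcn⟩ := hfin N
  have hs2 : 0 < (s - 1) / 2 := by linarith
  refine ⟨(s - 1) / 2 * min c 1, by positivity, fun n hn => ?_⟩
  rw [tent_iter hs.le, add_sub_cancel_left, abs_mul, abs_of_pos hs2, mul_assoc]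
  refine mul_le_mul_of_nonneg_left ?_ hs2.le
  rcases lt_or_ge n N with h1 | h1
  · calc min c 1 * ρ ^ n ≤ c * 1 :=
        mul_le_mul (min_le_left _ _) (pow_le_one₀ hρ.le hρ1.le) (by positivity) hc.le
      _ ≤ _ := by rw [mul_one]; exact hcn n hn h1
  · calc min c 1 * ρ ^ n ≤ 1 * ρ ^ n :=
        mul_le_mul_of_nonneg_right (min_le_right _ _) (by positivity)
      _ ≤ _ := by rw [one_mul]; exact hN n h1

/-- First part of Theorem F: for Lebesgue-almost every parameter s ∈ [√2,2],
the tent map f_s does not have standard shadowing with accuracy L·ε^α for any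
L > 0 and α ∈ (0,1). -/
theorem tent_map_ae_no_holder_shadowing :
    volume (Icc (Real.sqrt 2) 2 \
      {s : ℝ | ∀ L > (0 : ℝ), ∀ α ∈ Ioo (0 : ℝ) 1,
        ¬ TentHasShadowingWithAccuracy s (fun ε => L * ε ^ α)}) = 0 := by

  have hsq : 7 / 5 ≤ Real.sqrt 2 := Real.le_sqrt_of_sq_le (by norm_num)
  have hnull : volume ((⋃ k : ℕ, {s | s ∈ Icc (Real.sqrt 2) 2 ∧ s ≠ 3 / 2 ∧
      ¬ ∀ᶠ n in Filter.atTop, (1 - 1 / ((k : ℝ) + 2)) ^ n ≤ |cy n s|}) ∪ {3 / 2, 2}) = 0 := by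
    refine measure_union_null (measure_iUnion_null fun k => ?_)
      ((Set.toFinite _).measure_zero _)
    have hk : (0 : ℝ) < (k : ℝ) + 2 := by positivity
    refine bad_null ?_ ?_
    · rw [sub_pos, div_lt_one hk]
      have : (0 : ℝ) ≤ k := Nat.cast_nonneg k
      linarith
    · have : 0 < 1 / ((k : ℝ) + 2) := by positivity
      linarith
  refine measure_mono_null (fun s hs => ?_) hnull
  by_contra hcon
  simp only [mem_union, mem_iUnion, mem_ofPred_eq, mem_insert_iff, mem_singleton_iff, not_or,
    not_exists, not_and, not_not] at hcon
  obtain ⟨hk, h32, h2⟩ := hcon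
  refine hs.2 fun L hL α hα => ?_
  have hs1 : 1 < s := by linarith [hs.1.1]
  refine no_shadowing hs1 (lt_of_le_of_ne hs.1.2 h2) (fun ρ hρ => ?_) hL hα
  obtain ⟨k, hk1⟩ := exists_nat_one_div_lt (sub_pos.2 hρ.2)
  have hlt : 1 / ((k : ℝ) + 2) ≤ 1 / ((k : ℝ) + 1) :=
    one_div_le_one_div_of_le (by positivity) (by linarith)
  refine uniform_bound hs1 hρ.1 hρ.2 ?_
  filter_upwards [hk k hs.1 h32] with n hn
  exact (pow_le_pow_left₀ hρ.1.le (by linarith) n).trans hn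
end

section
/- Let s ∈ [√2,2) be N-periodic, i.e. the critical point 1/2 is periodic for the tent map f_s with minimal period N. Then there exists ε₀ > 0 such that for every ε ∈ (0,ε₀), every ε-pseudotrajectory of f_s can be ((s−1)^{−1} + s^4)·(N+1)·s^{N+1}·ε-shadowed: for every ε-pseudotrajectory (x_k) in [0,1] there exists p ∈ [0,1] with |x_k − f_s^k(p)| ≤ ((s−1)^{−1} + s^4)·(N+1)·s^{N+1}·ε for all k ≥ 0. -/
open Set

/-- A uniform positive lower bound for finitely many nonzero distances. -/
lemma tent_exists_gap (a : ℕ → ℝ) (N : ℕ) (h : ∀ k, 0 < k → k < N → a k ≠ 1 / 2) :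
    ∃ m > (0 : ℝ), ∀ k, 0 < k → k < N → m ≤ |a k - 1 / 2| := by
  induction N with
  | zero => exact ⟨1, one_pos, fun k _ h2 => absurd h2 (by omega)⟩
  | succ n ih =>
    obtain ⟨m, hm, hmk⟩ := ih (fun k h1 h2 => h k h1 (by omega))
    by_cases hn : 0 < n
    · have hpos : 0 < |a n - 1 / 2| := abs_pos.2 (sub_ne_zero.2 (h n hn (by omega)))
      refine ⟨min m |a n - 1 / 2|, lt_min hm hpos, fun k h1 h2 => ?_⟩
      rcases Nat.lt_succ_iff_lt_or_eq.1 h2 with h3 | h3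
      · exact (min_le_left _ _).trans (hmk k h1 h3)
      · subst h3; exact min_le_right _ _
    · exact ⟨m, hm, fun k h1 h2 => absurd h1 (by omega)⟩

/-- Finite backward orbits. -/
lemma tent_finite_orbit (n : ℕ) : ∀ φ : ℕ → ℝ → ℝ,
    (∀ k, ∀ y ∈ Icc (0 : ℝ) 1, φ k y ∈ Icc (0 : ℝ) 1) →
    ∃ p : ℕ → ℝ, (∀ k, p k ∈ Icc (0 : ℝ) 1) ∧ ∀ k < n, p k = φ k (p (k + 1)) := by
  induction n with
  | zero => exact fun φ _ => ⟨fun _ => 0, fun _ => by simp, fun k hk => absurd hk (by omega)⟩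
  | succ n ih =>
    intro φ hφ
    obtain ⟨p, hp, hpk⟩ := ih (fun k => φ (k + 1)) (fun k => hφ (k + 1))
    refine ⟨fun k => Nat.casesOn k (φ 0 (p 0)) p, ?_, ?_⟩
    · rintro (_ | k)
      · exact hφ 0 _ (hp 0)
      · exact hp k
    · rintro (_ | k) hk
      · rfl
      · exact hpk k (by omega)

/-- Infinite backward orbits, by compactness. -/
lemma tent_infinite_orbit (φ : ℕ → ℝ → ℝ) (hc : ∀ k, Continuous (φ k))
    (hφ : ∀ k, ∀ y ∈ Icc (0 : ℝ) 1, φ k y ∈ Icc (0 : ℝ) 1) :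
    ∃ p : ℕ → ℝ, (∀ k, p k ∈ Icc (0 : ℝ) 1) ∧ ∀ k, p k = φ k (p (k + 1)) := by
  let K : ℕ → Set (ℕ → ℝ) := fun n =>
    (Set.univ.pi fun _ => Icc (0 : ℝ) 1) ∩ {p | ∀ k < n, p k = φ k (p (k + 1))}
  have hclosed : ∀ n, IsClosed {p : ℕ → ℝ | ∀ k < n, p k = φ k (p (k + 1))} := by
    intro n
    simp only [ofPred_forall]
    refine isClosed_iInter fun k => isClosed_iInter fun _ => ?_
    exact isClosed_eq (continuous_apply k) ((hc k).comp (continuous_apply (k + 1)))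
  have hcomp : IsCompact (Set.univ.pi fun _ : ℕ => Icc (0 : ℝ) 1) :=
    isCompact_univ_pi fun _ => isCompact_Icc
  have hne : (⋂ n, K n).Nonempty := by
    apply IsCompact.nonempty_iInter_of_sequence_nonempty_isCompact_isClosed K
    · rintro n p ⟨h1, h2⟩
      exact ⟨h1, fun k hk => h2 k (by omega)⟩
    · intro n
      obtain ⟨p, h1, h2⟩ := tent_finite_orbit n φ hφ
      exact ⟨p, fun k _ => h1 k, h2⟩
    · exact hcomp.inter_right (hclosed 0)
    · exact fun n => hcomp.isClosed.inter (hclosed n)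
  obtain ⟨p, hp⟩ := hne
  rw [mem_iInter] at hp
  exact ⟨p, fun k => (hp 0).1 k (mem_univ k), fun k => (hp (k + 1)).2 k (by omega)⟩

/-- A bounded solution of an expanding inequality is small. -/
lemma tent_bounded_small (s δ : ℝ) (hs : 1 < s) (a : ℕ → ℝ) (ha : ∀ k, a k ≤ 1) (hδ : 0 < δ)
    (h : ∀ k, s * a k ≤ a (k + 1) + (s - 1) * δ) (k : ℕ) : a k ≤ δ := by
  by_contra! hk
  have h1 : ∀ n, s ^ n * (a k - δ) ≤ a (k + n) - δ := by
    intro n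
    induction n with
    | zero => simp
    | succ n ih =>
      have := h (k + n)
      have h2 : s * (s ^ n * (a k - δ)) ≤ s * (a (k + n) - δ) :=
        mul_le_mul_of_nonneg_left ih (by linarith)
      rw [← add_assoc, pow_succ]
      nlinarith
  obtain ⟨n, hn⟩ := pow_unbounded_of_one_lt (1 / (a k - δ)) hs
  rw [div_lt_iff₀ (by linarith)] at hn
  have := h1 n
  have := ha (k + n)
  linarith

lemma tent_aux (s : ℝ) (hs1 : 1 < s) (N : ℕ) (hN : 1 ≤ N)
    (hper : (tentMap s)^[N] (1 / 2) = 1 / 2) (m δ : ℝ) (hδ : 0 < δ)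
    (hm : ∀ k, 0 < k → k < N → m ≤ |(tentMap s)^[k] (1 / 2) - 1 / 2|)
    (hδm : (s ^ N + 1) * δ < m) (x : ℕ → ℝ) (hx : ∀ k : ℕ, x k ∈ Icc (0 : ℝ) 1)
    (hpt : ∀ k : ℕ, |tentMap s (x k) - x (k + 1)| ≤ (s - 1) * δ) :
    ∃ p ∈ Icc (0 : ℝ) 1, ∀ k : ℕ, |x k - (tentMap s)^[k] p| ≤ (1 + 2 * s ^ N) * δ := by
  have hs0 : 0 < s := by linarith
  obtain ⟨p, hp, hpk⟩ := tent_infinite_orbit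
    (fun k y => if x k ≤ 1 / 2 then y / s else 1 - y / s)
    (fun k => by
      by_cases h : x k ≤ 1 / 2
      · simp only [h, if_true]; fun_prop
      · simp only [h, if_false]; fun_prop)
    (fun k y hy => by
      have h1 : 0 ≤ y / s := div_nonneg hy.1 hs0.le
      have h2 : y / s ≤ 1 := (div_le_one hs0).2 (by linarith [hy.2])
      try dsimp only
      split_ifs
      · exact ⟨h1, h2⟩
      · exact ⟨by linarith, by linarith⟩)
  have hL : ∀ k, x k ≤ 1 / 2 → p (k + 1) = s * p k := by
    intro k hk
    have := hpk k
    simp only [hk, if_true] at this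
    rw [this]; field_simp
  have hR : ∀ k, 1 / 2 < x k → p (k + 1) = s * (1 - p k) := by
    intro k hk
    have := hpk k
    simp only [not_le.2 hk, if_false] at this
    rw [this]; field_simp; ring
  have hxp : ∀ k, |x k - p k| ≤ δ := by
    refine tent_bounded_small s δ hs1 (fun k => |x k - p k|) ?_ hδ ?_
    · intro k
      have h1 := hx k
      have h2 := hp k
      exact abs_le.2 ⟨by linarith [h1.1, h2.2], by linarith [h1.2, h2.1]⟩
    · intro k
      have h1 := hpt k
      try dsimp only
      have h2 : s * |x k - p k| = |tentMap s (x k) - p (k + 1)| := by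
        rw [← abs_of_pos hs0, ← abs_mul, abs_of_pos hs0]
        by_cases h : x k ≤ 1 / 2
        · rw [hL k h, tentMap, if_pos h]; congr 1; ring
        · rw [hR k (not_le.1 h), tentMap, if_neg h, abs_sub_comm]; congr 1; ring
      rw [h2]
      have := abs_sub_le (tentMap s (x k)) (x (k + 1)) (p (k + 1))
      linarith
  have hpow : ∀ j, j ≤ N → s ^ j ≤ s ^ N := fun j hj => pow_le_pow_right₀ hs1.le hj
  -- one step from the merged or reflected state
  have hstep : ∀ k q, (q = p k ∨ q = 1 - p k) → tentMap s q = p (k + 1) ∨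
      (tentMap s q + p (k + 1) = s ∧ |p (k + 1) - s / 2| ≤ s * δ) := by
    intro k q hq
    have h0 := abs_le.1 (hxp k)
    have hq' : tentMap s q = tentMap s (p k) := by
      rcases hq with rfl | rfl
      · rfl
      · unfold tentMap
        split_ifs with h1 h2 h2
        · have : p k = 1 / 2 := by linarith
          rw [this]; ring
        · rfl
        · ring
        · exfalso; linarith
    rw [hq']
    unfold tentMap
    by_cases hxk : x k ≤ 1 / 2
    · rw [hL k hxk]
      split_ifs with h1
      · left; rfl
      · right
        exact ⟨by ring, abs_le.2 ⟨by nlinarith, by nlinarith⟩⟩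
    · rw [hR k (not_le.1 hxk)]
      split_ifs with h1
      · right
        exact ⟨by ring, abs_le.2 ⟨by nlinarith, by nlinarith⟩⟩
      · left; rfl
  have hc1 : tentMap s (1 / 2) = s / 2 := by rw [tentMap, if_pos le_rfl]; ring
  have hinv : ∀ k, (tentMap s)^[k] (p 0) = p k ∨ ∃ j, 1 ≤ j ∧ j ≤ N ∧
      (tentMap s)^[k] (p 0) + p k = 2 * (tentMap s)^[j] (1 / 2) ∧
      |p k - (tentMap s)^[j] (1 / 2)| ≤ s ^ j * δ := by
    intro k
    induction k with
    | zero => left; rfl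
    | succ k ih =>
      rw [Function.iterate_succ_apply']
      generalize (tentMap s)^[k] (p 0) = q at ih
      have hfin : (q = p k ∨ q = 1 - p k) → tentMap s q = p (k + 1) ∨ ∃ j, 1 ≤ j ∧ j ≤ N ∧
          tentMap s q + p (k + 1) = 2 * (tentMap s)^[j] (1 / 2) ∧
          |p (k + 1) - (tentMap s)^[j] (1 / 2)| ≤ s ^ j * δ := by
        intro h
        rcases hstep k q h with h1 | ⟨h1, h2⟩
        · left; exact h1
        · right
          refine ⟨1, le_rfl, hN, ?_, ?_⟩
          · rw [Function.iterate_one, hc1, h1]; ring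
          · rw [Function.iterate_one, hc1, pow_one]; exact h2
      rcases ih with h | ⟨j, hj1, hjN, hsum, hd⟩
      · exact hfin (Or.inl h)
      rcases hjN.lt_or_eq with hlt | heq
      · right
        refine ⟨j + 1, by omega, hlt, ?_⟩
        rw [Function.iterate_succ_apply']
        have hmj := hm j hj1 hlt
        generalize (tentMap s)^[j] (1 / 2) = c at hsum hd hmj
        have hd' := abs_le.1 hd
        have h0 := abs_le.1 (hxp k)
        have hb : s ^ j * δ ≤ s ^ N * δ := mul_le_mul_of_nonneg_right (hpow j hjN) hδ.le
        rw [pow_succ]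
        rcases le_abs.1 hmj with hside | hside
        · have e1 : ¬ c ≤ 1 / 2 := by intro h; nlinarith
          have e2 : ¬ q ≤ 1 / 2 := by intro h; nlinarith
          have e3 : 1 / 2 < x k := by nlinarith
          rw [tentMap, tentMap, if_neg e1, if_neg e2, hR k e3]
          refine ⟨by linear_combination (-s) * hsum, abs_le.2 ⟨?_, ?_⟩⟩ <;> nlinarith
        · have e1 : c ≤ 1 / 2 := by nlinarith
          have e2 : q ≤ 1 / 2 := by nlinarith
          have e3 : x k ≤ 1 / 2 := by nlinarith
          rw [tentMap, tentMap, if_pos e1, if_pos e2, hL k e3]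
          refine ⟨by linear_combination s * hsum, abs_le.2 ⟨?_, ?_⟩⟩ <;> nlinarith
      · subst heq
        rw [hper] at hsum
        exact hfin (Or.inr (by linarith))
  refine ⟨p 0, hp 0, fun k => ?_⟩
  have h0 := abs_le.1 (hxp k)
  have hsN : 0 < s ^ N * δ := by positivity
  rcases hinv k with h | ⟨j, hj1, hjN, hsum, hd⟩
  · rw [h]
    exact (hxp k).trans (by nlinarith)
  · have hb : s ^ j * δ ≤ s ^ N * δ := mul_le_mul_of_nonneg_right (hpow j hjN) hδ.le
    have hd' := abs_le.1 hd
    exact abs_le.2 ⟨by nlinarith, by nlinarith⟩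

/-- Coven–Kan–Yorke: if the critical point 1/2 is periodic with minimal period N
for f_s, then f_s has standard shadowing with the explicit Lipschitz accuracy
((s−1)⁻¹ + s⁴)·(N+1)·s^{N+1}·ε. -/
theorem tent_map_periodic_parameter_lipschitz_shadowing
    (s : ℝ) (hs : Real.sqrt 2 ≤ s) (hs2 : s < 2)
    (N : ℕ) (hN : 1 ≤ N)
    (hper : (tentMap s)^[N] (1 / 2) = 1 / 2)
    (hmin : ∀ k, 0 < k → k < N → (tentMap s)^[k] (1 / 2) ≠ 1 / 2) :
    ∃ ε₀ > (0 : ℝ), ∀ ε ∈ Ioo (0 : ℝ) ε₀, ∀ x : ℕ → ℝ,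
      (∀ k : ℕ, x k ∈ Icc (0 : ℝ) 1) →
      (∀ k : ℕ, |tentMap s (x k) - x (k + 1)| ≤ ε) →
      ∃ p ∈ Icc (0 : ℝ) 1, ∀ k : ℕ,
        |x k - (tentMap s)^[k] p| ≤ ((s - 1)⁻¹ + s ^ 4) * (N + 1) * s ^ (N + 1) * ε := by
  have hs14 : 1.4 ≤ s := le_trans (Real.le_sqrt_of_sq_le (by norm_num)) hs
  have hs1 : 0 < s - 1 := by linarith
  obtain ⟨m, hm0, hm⟩ := tent_exists_gap (fun k => (tentMap s)^[k] (1 / 2)) N hmin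
  have hP : 0 < s ^ N + 1 := by positivity
  refine ⟨m * (s - 1) / (s ^ N + 1), by positivity, fun ε hε x hx hpt => ?_⟩
  have hε0 : 0 < ε := hε.1
  have hεm := hε.2
  rw [lt_div_iff₀ hP] at hεm
  have hδ : 0 < (s - 1)⁻¹ * ε := by positivity
  have hcan : (s - 1) * ((s - 1)⁻¹ * ε) = ε := by field_simp
  obtain ⟨p, hp, hpk⟩ := tent_aux s (by linarith) N hN hper m ((s - 1)⁻¹ * ε) hδ hm
    (by
      have : (s ^ N + 1) * ((s - 1)⁻¹ * ε) = ε * (s ^ N + 1) / (s - 1) := by field_simp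
      rw [this, div_lt_iff₀ hs1]; exact hεm) x hx
    (fun k => by rw [hcan]; exact hpt k)
  refine ⟨p, hp, fun k => (hpk k).trans ?_⟩
  have hsN : s ≤ s ^ N := le_self_pow₀ (by linarith) (by omega)
  have hN1 : (1 : ℝ) ≤ N := by exact_mod_cast hN
  have key : 1 + 2 * s ^ N ≤ (N + 1) * s ^ (N + 1) := by
    have h1 : 2 * s ^ (N + 1) ≤ (N + 1) * s ^ (N + 1) :=
      mul_le_mul_of_nonneg_right (by linarith) (by positivity)
    rw [pow_succ] at h1 ⊢
    nlinarith
  have h2 : 0 ≤ s ^ 4 * ((N + 1) * s ^ (N + 1)) * ε := by positivity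
  calc (1 + 2 * s ^ N) * ((s - 1)⁻¹ * ε) ≤ ((N + 1) * s ^ (N + 1)) * ((s - 1)⁻¹ * ε) :=
        mul_le_mul_of_nonneg_right key hδ.le
    _ ≤ ((N + 1) * s ^ (N + 1)) * ((s - 1)⁻¹ * ε) + s ^ 4 * ((N + 1) * s ^ (N + 1)) * ε := by
        linarith
    _ = ((s - 1)⁻¹ + s ^ 4) * (N + 1) * s ^ (N + 1) * ε := by ring
end
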